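/- Let ζ ∈ (-1/2, ∞). Then there exist constants c₁, c₂, c₃, c₄ > 0 (depending only on ζ) such that for all r, s, t > 0: c₁ · t^{-1/2} · exp(-(r-s)²/(c₂ t)) · (rs + t)^{-ζ} ≤ p_ζ^{(2)}(t,r,s) ≤ c₃ · t^{-1/2} · exp(-(r-s)²/(c₄ t)) · (rs + t)^{-ζ}. -/

import Mathlib

open MeasureTheory Real Set Filter

/-- Modified Bessel function of the first kind of order `ν`. -/
noncomputable def besselI (ν x : ℝ) : ℝ :=
  ∑' k : ℕ, (x / 2) ^ (2 * (k : ℝ) + ν) / ((Nat.factorial k : ℝ) * Real.Gamma ((k : ℝ) + ν + 1))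

/-- The Bessel heat kernel `p_ζ^{(2)}(t,r,s)`. -/
noncomputable def besselHeat (ζ t r s : ℝ) : ℝ :=
  (r * s) ^ ((1 : ℝ) / 2 - ζ) / (2 * t) * Real.exp (-(r ^ 2 + s ^ 2) / (4 * t)) *
    besselI (ζ - 1 / 2) (r * s / (2 * t))


/-!
Legendre's duplication formula turns the Bessel series into
`I_ν(x) = (x / 2) ^ ν / √π * ∑ k, x ^ (2 k) / (2 k)! * Γ(1/2 + k) / Γ(ν + 1 + k)`, whose Gamma
quotient is comparable to `(2 k + 1) ^ p` with `p = -(ν + 1/2)`. Up to a factor `e ^ x`, the sum is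
thus a `p`-th moment of `N + 1` for a Poisson variable `N` of mean `x`, restricted to the event that
`N` is even, and one expects `N + 1` to be of size `1 + x`. The identity `E[N f(N)] = x E[f(N + 1)]`
bounds the full moments of integer order, interpolation those of real order, and this bounds the
even part from above; the AM-GM inequality bounds the even part of order `p` from below by that of
order `-p`. Hence `I_ν(x) ≍ x ^ ν e ^ x (1 + x) ^ (-(ν + 1/2))` on `(0, ∞)`, and for
`x = r s / (2 t)` the factor `e ^ x` completes the square in the exponential of the heat kernel.
-/

section

open Asymptotics
open scoped Topology Nat

theorem isTheta_top_of_isTheta_cofinite {α E F : Type*} [NormedAddCommGroup E]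
    [NormedAddCommGroup F] {f : α → E} {g : α → F} (h : f =Θ[cofinite] g)
    (hf : ∀ x, f x ≠ 0) (hg : ∀ x, g x ≠ 0) : f =Θ[⊤] g :=
  ⟨isBigO_top.2 ((isBigO_cofinite_iff fun x hx => absurd hx (hg x)).1 h.1),
    isBigO_top.2 ((isBigO_cofinite_iff fun x hx => absurd hx (hf x)).1 h.2)⟩

theorem exists_pos_bounds_of_isTheta_principal {α : Type*} {s : Set α} {f g : α → ℝ}
    (h : f =Θ[𝓟 s] g) (hf : ∀ x ∈ s, 0 ≤ f x) (hg : ∀ x ∈ s, 0 ≤ g x) :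
    ∃ c C : ℝ, 0 < c ∧ 0 < C ∧ ∀ x ∈ s, c * g x ≤ f x ∧ f x ≤ C * g x := by
  obtain ⟨C, hC, hfg⟩ := h.1.exists_pos
  obtain ⟨D, hD, hgf⟩ := h.2.exists_pos
  refine ⟨D⁻¹, C, inv_pos.2 hD, hC, fun x hx => ?_⟩
  have hfg := eventually_principal.1 hfg.bound x hx
  have hgf := eventually_principal.1 hgf.bound x hx
  simp only [norm_of_nonneg (hf x hx), norm_of_nonneg (hg x hx)] at hfg hgf
  exact ⟨(inv_mul_le_iff₀ hD).2 hgf, hfg⟩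

section tsum

variable {α ι : Type*} {s : Set α} {e : α → ι → ℝ} {v w : ι → ℝ}

theorem isBigO_tsum_mul (he : ∀ x ∈ s, 0 ≤ e x) (hv : 0 ≤ v)
    (hs : ∀ x ∈ s, Summable fun i => e x i * v i) (h : w =O[⊤] v) :
    (fun x => ∑' i, e x i * w i) =O[𝓟 s] fun x => ∑' i, e x i * v i := by
  obtain ⟨C, hC⟩ := isBigO_top.1 h
  refine isBigO_principal.2 ⟨C, fun x hx => ?_⟩
  rw [norm_of_nonneg (tsum_nonneg fun i => mul_nonneg (he x hx i) (hv i))]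
  refine tsum_of_norm_bounded ((hs x hx).hasSum.mul_left C) fun i => ?_
  have hwv : ‖w i‖ ≤ C * v i := by simpa only [norm_of_nonneg (hv i)] using hC i
  rw [norm_mul, norm_of_nonneg (he x hx i), mul_left_comm]
  exact mul_le_mul_of_nonneg_left hwv (he x hx i)

theorem isTheta_tsum_mul (he : ∀ x ∈ s, 0 ≤ e x) (hv : 0 ≤ v) (hw : 0 ≤ w)
    (hs : ∀ x ∈ s, Summable fun i => e x i * v i) (h : w =Θ[⊤] v) :
    (fun x => ∑' i, e x i * w i) =Θ[𝓟 s] fun x => ∑' i, e x i * v i := by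
  refine ⟨isBigO_tsum_mul he hv hs h.1, isBigO_tsum_mul he hw (fun x hx => ?_) h.2⟩
  refine summable_of_isBigO (hs x hx) (((isBigO_refl (e x) ⊤).mul h.1).mono le_top)

end tsum

section Gamma

variable {a b : ℝ}

theorem Gamma_add_natCast (ha : ∀ m : ℕ, a ≠ -m) (n : ℕ) :
    Gamma (a + n) = Gamma a * ∏ j ∈ Finset.range n, (a + j) := by
  induction n with
  | zero => simp
  | succ n ih =>
    have hne : a + n ≠ 0 := fun h => ha n (eq_neg_of_add_eq_zero_left h)
    rw [Finset.prod_range_succ, ← mul_assoc, ← ih, Nat.cast_succ, ← add_assoc, Gamma_add_one hne,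
      mul_comm]

theorem isEquivalent_Gamma_add_natCast (ha : ∀ m : ℕ, a ≠ -m) :
    (fun n : ℕ => Gamma (a + n)) ~[atTop] fun n => (n ! : ℝ) * (n : ℝ) ^ (a - 1) := by
  have hΓ : Gamma a ≠ 0 := Gamma_ne_zero ha
  have hSeq : Tendsto (fun n => Gamma a / GammaSeq a n) atTop (𝓝 1) := by
    rw [← div_self hΓ]
    exact tendsto_const_nhds.div (GammaSeq_tendsto_Gamma a) hΓ
  have hφ : Tendsto (fun n : ℕ => Gamma a / GammaSeq a n * (n / (n + a))) atTop (𝓝 1) := by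
    simpa using hSeq.mul (tendsto_natCast_div_add_atTop a)
  refine isEquivalent_iff_exists_eq_mul.2 ⟨_, hφ, ?_⟩
  filter_upwards [eventually_gt_atTop 0] with n hn
  have hne (j : ℕ) : a + j ≠ 0 := fun h => ha j (eq_neg_of_add_eq_zero_left h)
  have hprod : ∏ j ∈ Finset.range n, (a + j) ≠ 0 := Finset.prod_ne_zero_iff.2 fun j _ => hne j
  have hn' : (0 : ℝ) < n := Nat.cast_pos.2 hn
  have hne' := hne n
  rw [Pi.mul_apply, Gamma_add_natCast ha, GammaSeq, Finset.prod_range_succ, add_comm (n : ℝ) a,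
    rpow_sub_one hn'.ne']
  field_simp

theorem isTheta_Gamma_add_natCast_div (ha : ∀ m : ℕ, a ≠ -m) (hb : ∀ m : ℕ, b ≠ -m) :
    (fun n : ℕ => Gamma (a + n) / Gamma (b + n)) =Θ[⊤] fun n => (2 * n + 1 : ℝ) ^ (a - b) := by
  have hΓ {c : ℝ} (hc : ∀ m : ℕ, c ≠ -m) (n : ℕ) : Gamma (c + n) ≠ 0 :=
    Gamma_ne_zero fun m h => hc (m + n) (by push_cast; linarith)
  have hlin : (fun n : ℕ => (n : ℝ)) =Θ[atTop] fun n => (2 * n + 1 : ℝ) := by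
    refine ⟨.of_bound 1 ?_, .of_bound 3 ?_⟩ <;>
      filter_upwards [eventually_ge_atTop 1] with n hn
    · rw [norm_of_nonneg (by positivity), norm_of_nonneg (by positivity)]
      linarith [n.cast_nonneg (α := ℝ)]
    · have : (1 : ℝ) ≤ n := by exact_mod_cast hn
      rw [norm_of_nonneg (by positivity), norm_of_nonneg (by positivity)]
      linarith
  refine isTheta_top_of_isTheta_cofinite ?_ (fun n => div_ne_zero (hΓ ha n) (hΓ hb n))
    (fun n => by positivity)
  rw [Nat.cofinite_eq_atTop]
  calc (fun n : ℕ => Gamma (a + n) / Gamma (b + n))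
      =Θ[atTop] fun n => (n ! * (n : ℝ) ^ (a - 1)) / (n ! * (n : ℝ) ^ (b - 1)) :=
        ((isEquivalent_Gamma_add_natCast ha).div (isEquivalent_Gamma_add_natCast hb)).isTheta
    _ =ᶠ[atTop] fun n => (n : ℝ) ^ (a - b) := by
        filter_upwards [eventually_gt_atTop 0] with n hn
        have hn' : (0 : ℝ) < n := Nat.cast_pos.2 hn
        rw [mul_div_mul_left _ _ (by positivity), ← rpow_sub hn', sub_sub_sub_cancel_right]
    _ =Θ[atTop] fun n => (2 * n + 1 : ℝ) ^ (a - b) :=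
        hlin.rpow (.of_forall fun n => n.cast_nonneg)
          (.of_forall fun n => (by positivity : (0 : ℝ) ≤ 2 * n + 1))

end Gamma

section rpow

theorem rpow_le_rpow_abs_mul_rpow {x y K : ℝ} (p : ℝ) (hx : 0 < x) (hy : 0 < y) (hxy : x ≤ K * y)
    (hyx : y ≤ K * x) : x ^ p ≤ K ^ |p| * y ^ p := by
  have hK : 0 < K := pos_of_mul_pos_left (hx.trans_le hxy) hy.le
  rcases le_total 0 p with hp | hp
  · rw [abs_of_nonneg hp, ← mul_rpow hK.le hy.le]
    exact rpow_le_rpow hx.le hxy hp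
  · rw [abs_of_nonpos hp, rpow_neg hK.le, ← inv_rpow hK.le, ← mul_rpow (by positivity) hy.le]
    exact rpow_le_rpow_of_nonpos (by positivity) ((inv_mul_le_iff₀ hK).2 hyx) hp

theorem rpow_le_rpow_add_rpow {v p q r : ℝ} (hv : 0 < v) (hqp : q ≤ p) (hpr : p ≤ r) :
    v ^ p ≤ v ^ q + v ^ r := by
  rcases le_total 1 v with h | h
  · exact le_add_of_nonneg_of_le (by positivity) (rpow_le_rpow_of_exponent_le h hpr)
  · exact le_add_of_le_of_nonneg (rpow_le_rpow_of_exponent_ge hv h hqp) (by positivity)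

end rpow

section moments

theorem summable_pow_div_factorial_mul_rpow (p x : ℝ) :
    Summable fun n : ℕ => x ^ n / n ! * (n + 1 : ℝ) ^ p := by
  have hexp : (fun n : ℕ => (n + 1 : ℝ) ^ p) =O[atTop] fun n : ℕ => exp (n + 1) :=
    ((isLittleO_rpow_exp_atTop p).comp_tendsto
      (tendsto_atTop_add_const_right _ 1 tendsto_natCast_atTop_atTop)).isBigO
  have hs : Summable fun n : ℕ => x ^ n / n ! * exp (n + 1) := by
    refine ((summable_pow_div_factorial (x * exp 1)).mul_right (exp 1)).congr fun n => ?_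
    rw [mul_pow, ← exp_nat_mul, mul_one, exp_add]
    ring
  exact summable_of_isBigO_nat hs ((isBigO_refl _ _).mul hexp)

/-- The Stein–Chen identity `E[N f(N)] = x E[f(N + 1)]` for a Poisson variable `N` of mean `x`. -/
theorem tsum_pow_div_factorial_mul_natCast_mul (x : ℝ) (f : ℕ → ℝ) :
    ∑' n : ℕ, x ^ n / n ! * (n * f n) = x * ∑' n : ℕ, x ^ n / n ! * f (n + 1) := by
  rw [← tsum_mul_left, ← (add_left_injective 1).tsum_eq]
  · refine tsum_congr fun n => ?_
    rw [Nat.factorial_succ, pow_succ]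
    push_cast
    field_simp
  · intro n hn
    cases n with
    | zero => simp at hn
    | succ n => exact ⟨n, rfl⟩


/-- `e ^ x` times the `p`-th moment of `(N + 1) / (1 + x)`, where `N` is a Poisson variable of mean
`x`. Dividing by `1 + x` makes all these moments comparable to `e ^ x`. -/
noncomputable def poissonMoment (p x : ℝ) : ℝ :=
  ∑' n : ℕ, x ^ n / n ! * ((n + 1) / (1 + x)) ^ p

/-- The contribution to `poissonMoment` of the event that the Poisson variable is even. -/
noncomputable def evenPoissonMoment (p x : ℝ) : ℝ :=
  ∑' k : ℕ, x ^ (2 * k) / (2 * k)! * ((2 * k + 1) / (1 + x)) ^ p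

variable {x : ℝ}

theorem summable_poissonMoment (p : ℝ) (hx : 0 ≤ x) :
    Summable fun n : ℕ => x ^ n / n ! * ((n + 1) / (1 + x)) ^ p := by
  refine ((summable_pow_div_factorial_mul_rpow p x).div_const ((1 + x) ^ p)).congr fun n => ?_
  rw [div_rpow (by positivity) (by positivity), mul_div_assoc]

theorem summable_evenPoissonMoment (p : ℝ) (hx : 0 ≤ x) :
    Summable fun k : ℕ => x ^ (2 * k) / (2 * k)! * ((2 * k + 1) / (1 + x)) ^ p := by
  simpa [Function.comp_def] using
    (summable_poissonMoment p hx).comp_injective (mul_right_injective₀ two_ne_zero)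

theorem poissonMoment_nonneg (p : ℝ) (hx : 0 ≤ x) : 0 ≤ poissonMoment p x :=
  tsum_nonneg fun n => by positivity

theorem evenPoissonMoment_nonneg (p : ℝ) (hx : 0 ≤ x) : 0 ≤ evenPoissonMoment p x :=
  tsum_nonneg fun n => by positivity

theorem poissonMoment_zero (x : ℝ) : poissonMoment 0 x = exp x := by
  simp [poissonMoment, exp_eq_exp_ℝ, NormedSpace.exp_eq_tsum_div]

theorem evenPoissonMoment_le_poissonMoment (p : ℝ) (hx : 0 ≤ x) :
    evenPoissonMoment p x ≤ poissonMoment p x := by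
  have h := tsum_comp_le_tsum_of_inj (summable_poissonMoment p hx) (fun n => by positivity)
    (mul_right_injective₀ (two_ne_zero (α := ℕ)))
  simpa [Function.comp_def] using! h

theorem one_add_mul_poissonMoment_add_one (p : ℝ) (hx : 0 ≤ x) :
    (1 + x) * poissonMoment (p + 1) x =
      poissonMoment p x + x * ∑' n : ℕ, x ^ n / n ! * ((n + 1 + 1) / (1 + x)) ^ p := by
  have hs := (summable_poissonMoment (p + 1) hx).mul_left (1 + x)
  have hterm (n : ℕ) : x ^ n / n ! * (n * ((n + 1) / (1 + x)) ^ p) =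
      (1 + x) * (x ^ n / n ! * ((n + 1) / (1 + x)) ^ (p + 1)) -
        x ^ n / n ! * ((n + 1) / (1 + x)) ^ p := by
    rw [rpow_add_one (by positivity)]
    field_simp
    ring
  have hshift := tsum_pow_div_factorial_mul_natCast_mul x fun n => ((n + 1) / (1 + x)) ^ p
  simp only [hterm, Nat.cast_succ] at hshift
  rw [hs.tsum_sub (summable_poissonMoment p hx), tsum_mul_left] at hshift
  rw [poissonMoment, poissonMoment, ← hshift, add_sub_cancel]

theorem poissonMoment_shift_bounds (p : ℝ) (hx : 0 ≤ x) :
    ∑' n : ℕ, x ^ n / n ! * ((n + 1 + 1) / (1 + x)) ^ p ≤ 2 ^ |p| * poissonMoment p x ∧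
      poissonMoment p x ≤ 2 ^ |p| * ∑' n : ℕ, x ^ n / n ! * ((n + 1 + 1) / (1 + x)) ^ p := by
  have hs := summable_poissonMoment p hx
  have hcomp (n : ℕ) : (n + 1 + 1) / (1 + x) ≤ 2 * ((n + 1) / (1 + x)) ∧
      (n + 1) / (1 + x) ≤ 2 * ((n + 1 + 1) / (1 + x)) := by
    constructor <;>
    · rw [← mul_div_assoc]
      gcongr
      linarith [n.cast_nonneg (α := ℝ)]
  have hshift_le (n : ℕ) : x ^ n / n ! * ((n + 1 + 1) / (1 + x)) ^ p ≤
      2 ^ |p| * (x ^ n / n ! * ((n + 1) / (1 + x)) ^ p) := by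
    rw [mul_left_comm]
    gcongr
    exact rpow_le_rpow_abs_mul_rpow p (by positivity) (by positivity) (hcomp n).1 (hcomp n).2
  have hle_shift (n : ℕ) : x ^ n / n ! * ((n + 1) / (1 + x)) ^ p ≤
      2 ^ |p| * (x ^ n / n ! * ((n + 1 + 1) / (1 + x)) ^ p) := by
    rw [mul_left_comm]
    gcongr
    exact rpow_le_rpow_abs_mul_rpow p (by positivity) (by positivity) (hcomp n).2 (hcomp n).1
  have hs' := Summable.of_nonneg_of_le (fun n => by positivity) hshift_le (hs.mul_left _)
  simp only [poissonMoment, ← tsum_mul_left]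
  exact ⟨hs'.tsum_le_tsum hshift_le (hs.mul_left _), hs.tsum_le_tsum hle_shift (hs'.mul_left _)⟩

theorem poissonMoment_add_one_le (p : ℝ) (hx : 0 ≤ x) :
    poissonMoment (p + 1) x ≤ 2 ^ |p| * poissonMoment p x := by
  have hK : (1 : ℝ) ≤ 2 ^ |p| := one_le_rpow one_le_two (abs_nonneg p)
  have hM := poissonMoment_nonneg p hx
  refine le_of_mul_le_mul_left ?_ (by positivity : 0 < 1 + x)
  calc (1 + x) * poissonMoment (p + 1) x
      = poissonMoment p x + x * ∑' n : ℕ, x ^ n / n ! * ((n + 1 + 1) / (1 + x)) ^ p :=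
        one_add_mul_poissonMoment_add_one p hx
    _ ≤ 2 ^ |p| * poissonMoment p x + x * (2 ^ |p| * poissonMoment p x) := by
        gcongr
        · exact le_mul_of_one_le_left hM hK
        · exact (poissonMoment_shift_bounds p hx).1
    _ = (1 + x) * (2 ^ |p| * poissonMoment p x) := by ring

theorem poissonMoment_le_add_one (p : ℝ) (hx : 0 ≤ x) :
    poissonMoment p x ≤ 2 ^ |p| * poissonMoment (p + 1) x := by
  have hK : (1 : ℝ) ≤ 2 ^ |p| := one_le_rpow one_le_two (abs_nonneg p)
  have hM := poissonMoment_nonneg p hx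
  refine le_of_mul_le_mul_left ?_ (by positivity : 0 < 1 + x)
  calc (1 + x) * poissonMoment p x
      = poissonMoment p x + x * poissonMoment p x := by ring
    _ ≤ 2 ^ |p| * poissonMoment p x +
          x * (2 ^ |p| * ∑' n : ℕ, x ^ n / n ! * ((n + 1 + 1) / (1 + x)) ^ p) := by
        gcongr
        · exact le_mul_of_one_le_left hM hK
        · exact (poissonMoment_shift_bounds p hx).2
    _ = 2 ^ |p| * ((1 + x) * poissonMoment (p + 1) x) := by
        rw [one_add_mul_poissonMoment_add_one p hx]
        ring
    _ = (1 + x) * (2 ^ |p| * poissonMoment (p + 1) x) := mul_left_comm _ _ _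

theorem isTheta_poissonMoment_add_one (p : ℝ) :
    poissonMoment (p + 1) =Θ[𝓟 (Ici 0)] poissonMoment p := by
  refine ⟨isBigO_principal.2 ⟨2 ^ |p|, fun x hx => ?_⟩,
    isBigO_principal.2 ⟨2 ^ |p|, fun x hx => ?_⟩⟩ <;>
    rw [norm_of_nonneg (poissonMoment_nonneg _ hx), norm_of_nonneg (poissonMoment_nonneg _ hx)]
  · exact poissonMoment_add_one_le p hx
  · exact poissonMoment_le_add_one p hx

theorem isTheta_poissonMoment_intCast (m : ℤ) : poissonMoment m =Θ[𝓟 (Ici 0)] exp := by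
  induction m with
  | zero => simpa only [Int.cast_zero, funext poissonMoment_zero] using isTheta_rfl
  | succ m ih =>
    push_cast at ih ⊢
    exact (isTheta_poissonMoment_add_one _).trans ih
  | pred m ih =>
    refine .trans ?_ ih
    simpa using (isTheta_poissonMoment_add_one (-m - 1)).symm

theorem poissonMoment_le_add {p q r : ℝ} (hqp : q ≤ p) (hpr : p ≤ r) (hx : 0 ≤ x) :
    poissonMoment p x ≤ poissonMoment q x + poissonMoment r x := by
  have hq := summable_poissonMoment q hx
  have hr := summable_poissonMoment r hx
  rw [poissonMoment, poissonMoment, poissonMoment, ← hq.tsum_add hr]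
  refine (summable_poissonMoment p hx).tsum_le_tsum (fun n => ?_) (hq.add hr)
  rw [← mul_add]
  gcongr
  exact rpow_le_rpow_add_rpow (by positivity) hqp hpr

theorem isBigO_poissonMoment_exp (p : ℝ) : poissonMoment p =O[𝓟 (Ici 0)] exp := by
  have hinterp : poissonMoment p =O[𝓟 (Ici 0)]
      fun x => poissonMoment ⌊p⌋ x + poissonMoment ⌈p⌉ x := by
    refine .of_norm_eventuallyLE (eventually_principal.2 fun x hx => ?_)
    exact (norm_of_nonneg (poissonMoment_nonneg p hx)).trans_le
      (poissonMoment_le_add (Int.floor_le p) (Int.le_ceil p) hx)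
  exact hinterp.trans
    ((isTheta_poissonMoment_intCast ⌊p⌋).1.add (isTheta_poissonMoment_intCast ⌈p⌉).1)

theorem isBigO_evenPoissonMoment_exp (p : ℝ) : evenPoissonMoment p =O[𝓟 (Ici 0)] exp := by
  refine .trans (.of_norm_eventuallyLE (eventually_principal.2 fun x hx => ?_))
    (isBigO_poissonMoment_exp p)
  exact (norm_of_nonneg (evenPoissonMoment_nonneg p hx)).trans_le
    (evenPoissonMoment_le_poissonMoment p hx)

theorem two_mul_mul_cosh_le_evenPoissonMoment_add (p δ : ℝ) (hx : 0 ≤ x) :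
    2 * δ * cosh x ≤ evenPoissonMoment p x + δ ^ 2 * evenPoissonMoment (-p) x := by
  have hcosh := (hasSum_cosh x).mul_left (2 * δ)
  have hs := summable_evenPoissonMoment p hx
  have hs' := (summable_evenPoissonMoment (-p) hx).mul_left (δ ^ 2)
  rw [evenPoissonMoment, evenPoissonMoment, ← tsum_mul_left, ← hs.tsum_add hs', ← hcosh.tsum_eq]
  refine hcosh.summable.tsum_le_tsum (fun k => ?_) (hs.add hs')
  set v : ℝ := ((2 * k + 1) / (1 + x)) ^ p with hv
  have hv0 : 0 < v := by positivity
  have amgm : 2 * δ ≤ v + δ ^ 2 * v⁻¹ := by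
    have hsq : v + δ ^ 2 * v⁻¹ - 2 * δ = (v - δ) ^ 2 / v := by
      field_simp
      ring
    exact sub_nonneg.1 (hsq ▸ by positivity)
  rw [rpow_neg (by positivity), ← hv, mul_left_comm (δ ^ 2), ← mul_add, mul_comm]
  gcongr

theorem isTheta_evenPoissonMoment_exp (p : ℝ) : evenPoissonMoment p =Θ[𝓟 (Ici 0)] exp := by
  refine ⟨isBigO_evenPoissonMoment_exp p, ?_⟩
  obtain ⟨C, hC, hbound⟩ := (isBigO_evenPoissonMoment_exp (-p)).exists_pos
  refine isBigO_principal.2 ⟨4 * C, fun x hx => ?_⟩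
  have hbound := eventually_principal.1 hbound.bound x hx
  rw [norm_of_nonneg (evenPoissonMoment_nonneg _ hx), norm_of_nonneg (exp_nonneg x)] at hbound
  rw [norm_of_nonneg (evenPoissonMoment_nonneg _ hx), norm_of_nonneg (exp_nonneg x)]
  have hcosh : exp x ≤ 2 * cosh x := by
    rw [cosh_eq]
    linarith [exp_nonneg (-x)]
  -- The choice `δ = 1 / (2 * C)` maximises `δ - δ ^ 2 * C`.
  calc exp x = 4 * C * ((2 * C)⁻¹ * exp x - ((2 * C)⁻¹) ^ 2 * (C * exp x)) := by
        field_simp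
        ring
    _ ≤ 4 * C * (2 * (2 * C)⁻¹ * cosh x - ((2 * C)⁻¹) ^ 2 * evenPoissonMoment (-p) x) := by
        rw [mul_right_comm 2, mul_comm (2 * cosh x)]
        gcongr
    _ ≤ 4 * C * evenPoissonMoment p x := by
        gcongr
        exact sub_le_iff_le_add.2 (two_mul_mul_cosh_le_evenPoissonMoment_add p _ hx)

end moments

section Bessel

variable {ν x : ℝ}

theorem besselI_nonneg (hν : -1 ≤ ν) (hx : 0 ≤ x) : 0 ≤ besselI ν x :=
  tsum_nonneg fun k => div_nonneg (by positivity) <|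
    mul_nonneg (by positivity) (Gamma_nonneg_of_nonneg (by linarith [k.cast_nonneg (α := ℝ)]))

theorem Gamma_half_add_natCast (k : ℕ) :
    Gamma (1 / 2 + k) = √π * (2 * k)! / (2 ^ (2 * k) * k !) := by
  have hdup := Gamma_mul_Gamma_add_half ((1 : ℝ) / 2 + k)
  rw [show (1 : ℝ) / 2 + k + 1 / 2 = k + 1 by ring, Gamma_nat_eq_factorial,
    show 2 * ((1 : ℝ) / 2 + k) = (2 * k : ℕ) + 1 by push_cast; ring, Gamma_nat_eq_factorial,
    show (1 : ℝ) - ((2 * k : ℕ) + 1) = -((2 * k : ℕ) : ℝ) by ring, rpow_neg two_pos.le,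
    rpow_natCast] at hdup
  rw [eq_div_iff (by positivity), mul_left_comm, hdup]
  field_simp

theorem besselI_eq_tsum (hx : 0 < x) : besselI ν x = (x / 2) ^ ν / √π *
    ∑' k : ℕ, x ^ (2 * k) / (2 * k)! * (Gamma (1 / 2 + k) / Gamma (ν + 1 + k)) := by
  rw [besselI, ← tsum_mul_left]
  refine tsum_congr fun k => ?_
  have hpow : (x / 2) ^ (2 * (k : ℝ) + ν) = x ^ (2 * k) / 2 ^ (2 * k) * (x / 2) ^ ν := by
    rw [rpow_add (by positivity), ← div_pow, ← rpow_natCast (x / 2) (2 * k)]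
    push_cast
    rfl
  rw [hpow, Gamma_half_add_natCast, show (k : ℝ) + ν + 1 = ν + 1 + k by ring]
  field_simp

theorem isTheta_tsum_even_mul {w : ℕ → ℝ} {p : ℝ} (hw : 0 ≤ w)
    (h : w =Θ[⊤] fun k => (2 * k + 1 : ℝ) ^ p) :
    (fun x : ℝ => ∑' k : ℕ, x ^ (2 * k) / (2 * k)! * w k) =Θ[𝓟 (Ici 0)]
      fun x => exp x * (1 + x) ^ p := by
  have hterm {x : ℝ} (hx : 0 ≤ x) (k : ℕ) : x ^ (2 * k) / (2 * k)! * (2 * k + 1 : ℝ) ^ p =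
      x ^ (2 * k) / (2 * k)! * ((2 * k + 1) / (1 + x)) ^ p * (1 + x) ^ p := by
    rw [mul_assoc, ← mul_rpow (by positivity) (by positivity), div_mul_cancel₀ _ (by positivity)]
  calc (fun x : ℝ => ∑' k : ℕ, x ^ (2 * k) / (2 * k)! * w k)
      =Θ[𝓟 (Ici 0)] fun x => ∑' k : ℕ, x ^ (2 * k) / (2 * k)! * (2 * k + 1 : ℝ) ^ p := by
        refine isTheta_tsum_mul (fun x (hx : 0 ≤ x) k => by positivity)
          (fun k => by positivity) hw (fun x hx => ?_) h
        simpa only [hterm hx] using (summable_evenPoissonMoment p hx).mul_right _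
    _ =ᶠ[𝓟 (Ici 0)] fun x => evenPoissonMoment p x * (1 + x) ^ p :=
        eventually_principal.2 fun x hx => by
          simp only [hterm hx, tsum_mul_right, evenPoissonMoment]
    _ =Θ[𝓟 (Ici 0)] fun x => exp x * (1 + x) ^ p :=
        (isTheta_evenPoissonMoment_exp p).mul isTheta_rfl

theorem isTheta_besselI (hν : -1 < ν) :
    besselI ν =Θ[𝓟 (Ioi 0)] fun x => x ^ ν * (exp x * (1 + x) ^ (-(ν + 1 / 2))) := by
  have hpole {a : ℝ} (ha : 0 < a) (m : ℕ) : a ≠ -m := by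
    linarith [m.cast_nonneg (α := ℝ)]
  have hweight : (fun k : ℕ => Gamma (1 / 2 + k) / Gamma (ν + 1 + k)) =Θ[⊤]
      fun k => (2 * k + 1 : ℝ) ^ (-(ν + 1 / 2)) := by
    convert isTheta_Gamma_add_natCast_div (hpole one_half_pos) (hpole (neg_lt_iff_pos_add.1 hν))
      using 3
    ring
  have hweight_nonneg : 0 ≤ fun k : ℕ => Gamma (1 / 2 + k) / Gamma (ν + 1 + k) := fun k =>
    div_nonneg (Gamma_nonneg_of_nonneg (by positivity))
      (Gamma_nonneg_of_nonneg (by linarith [k.cast_nonneg (α := ℝ)]))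
  have hseries := (isTheta_tsum_even_mul hweight_nonneg hweight).mono
    (principal_mono.2 Ioi_subset_Ici_self)
  have heq : besselI ν =ᶠ[𝓟 (Ioi 0)] fun x => (2 ^ ν * √π)⁻¹ * (x ^ ν *
      ∑' k : ℕ, x ^ (2 * k) / (2 * k)! * (Gamma (1 / 2 + k) / Gamma (ν + 1 + k))) :=
    eventually_principal.2 fun x (hx : 0 < x) => by
      rw [besselI_eq_tsum hx, div_rpow hx.le two_pos.le]
      field_simp
  exact heq.trans_isTheta
    ((isTheta_const_mul_left (by positivity)).2 (isTheta_rfl.mul hseries))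

end Bessel

section heatKernel

theorem besselHeat_nonneg {ζ r s t : ℝ} (hζ : -1 / 2 ≤ ζ) (hr : 0 ≤ r) (hs : 0 ≤ s) (ht : 0 ≤ t) :
    0 ≤ besselHeat ζ t r s :=
  mul_nonneg (by positivity) (besselI_nonneg (by linarith) (by positivity))

theorem besselHeat_prefactor_mul_eq {r s t : ℝ} (ζ : ℝ) (hr : 0 < r) (hs : 0 < s) (ht : 0 < t) :
    (r * s) ^ ((1 : ℝ) / 2 - ζ) / (2 * t) * exp (-(r ^ 2 + s ^ 2) / (4 * t)) *
      ((r * s / (2 * t)) ^ (ζ - 1 / 2) *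
        (exp (r * s / (2 * t)) * (1 + r * s / (2 * t)) ^ (-(ζ - 1 / 2 + 1 / 2)))) =
      (2 * t) ^ (-(1 : ℝ) / 2) * exp (-(r - s) ^ 2 / (4 * t)) * (r * s + 2 * t) ^ (-ζ) := by
  have hrs : 0 < r * s := by positivity
  have h2t : 0 < 2 * t := by positivity
  have hexp : exp (-(r - s) ^ 2 / (4 * t)) =
      exp (-(r ^ 2 + s ^ 2) / (4 * t)) * exp (r * s / (2 * t)) := by
    rw [← exp_add]
    congr 1
    field_simp
    ring
  have hrs_pow : (r * s) ^ ((1 : ℝ) / 2 - ζ) = ((r * s) ^ (ζ - 1 / 2))⁻¹ := by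
    rw [← rpow_neg hrs.le, neg_sub]
  have ht_pow : (2 * t) ^ (-(1 : ℝ) / 2) =
      ((2 * t) ^ (ζ - 1 / 2) * (2 * t) * (2 * t) ^ (-ζ))⁻¹ := by
    rw [← rpow_add_one h2t.ne', ← rpow_add h2t, ← rpow_neg h2t.le]
    ring_nf
  have hone_add : 1 + r * s / (2 * t) = (r * s + 2 * t) / (2 * t) := by
    field_simp
    ring
  rw [sub_add_cancel, hexp, hrs_pow, hone_add, div_rpow hrs.le h2t.le,
    div_rpow (by positivity) h2t.le, ht_pow]
  field_simp

/-- The variable `q` stands for `(r, s, t)`. -/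
theorem isTheta_besselHeat {ζ : ℝ} (hζ : -1 / 2 < ζ) :
    (fun q : ℝ × ℝ × ℝ => besselHeat ζ q.2.2 q.1 q.2.1)
      =Θ[𝓟 {q | 0 < q.1 ∧ 0 < q.2.1 ∧ 0 < q.2.2}] fun q =>
        q.2.2 ^ (-(1 : ℝ) / 2) * exp (-(q.1 - q.2.1) ^ 2 / (4 * q.2.2)) *
          (q.1 * q.2.1 + q.2.2) ^ (-ζ) := by
  set S : Set (ℝ × ℝ × ℝ) := {q | 0 < q.1 ∧ 0 < q.2.1 ∧ 0 < q.2.2}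
  have harg : Tendsto (fun q : ℝ × ℝ × ℝ => q.1 * q.2.1 / (2 * q.2.2)) (𝓟 S) (𝓟 (Ioi 0)) :=
    tendsto_principal_principal.2 fun q ⟨hr, hs, ht⟩ =>
      div_pos (mul_pos hr hs) (mul_pos two_pos ht)
  obtain ⟨hI_le, hI_ge⟩ := isTheta_besselI (ν := ζ - 1 / 2) (by linarith)
  have hI := (hI_le.comp_tendsto harg).antisymm (hI_ge.comp_tendsto harg)
  have ht : (fun q : ℝ × ℝ × ℝ => 2 * q.2.2) =Θ[𝓟 S] fun q => q.2.2 :=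
    (isTheta_const_mul_left two_ne_zero).2 isTheta_rfl
  have hrst : (fun q : ℝ × ℝ × ℝ => q.1 * q.2.1 + 2 * q.2.2) =Θ[𝓟 S]
      fun q => q.1 * q.2.1 + q.2.2 := by
    refine ⟨isBigO_principal.2 ⟨2, fun q ⟨hr, hs, ht⟩ => ?_⟩,
      isBigO_principal.2 ⟨1, fun q ⟨hr, hs, ht⟩ => ?_⟩⟩ <;>
    · have hrs : 0 < q.1 * q.2.1 := mul_pos hr hs
      rw [norm_of_nonneg (by positivity), norm_of_nonneg (by positivity)]
      linarith
  calc (fun q : ℝ × ℝ × ℝ => besselHeat ζ q.2.2 q.1 q.2.1)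
      =Θ[𝓟 S] _ := isTheta_rfl.mul hI
    _ =ᶠ[𝓟 S] fun q => (2 * q.2.2) ^ (-(1 : ℝ) / 2) *
          exp (-(q.1 - q.2.1) ^ 2 / (4 * q.2.2)) * (q.1 * q.2.1 + 2 * q.2.2) ^ (-ζ) :=
        eventually_principal.2 fun q ⟨hr, hs, ht⟩ => besselHeat_prefactor_mul_eq ζ hr hs ht
    _ =Θ[𝓟 S] _ := by
        refine ((ht.rpow ?_ ?_).mul isTheta_rfl).mul (hrst.rpow ?_ ?_) <;>
        · refine eventually_principal.2 fun q ⟨hr, hs, ht⟩ => ?_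
          simp only [Pi.zero_apply]
          positivity

end heatKernel

end

theorem stmt0 (ζ : ℝ) (hζ : -1/2 < ζ) :
    ∃ c₁ c₂ c₃ c₄ : ℝ, 0 < c₁ ∧ 0 < c₂ ∧ 0 < c₃ ∧ 0 < c₄ ∧
      ∀ r s t : ℝ, 0 < r → 0 < s → 0 < t →
        c₁ * t ^ (-(1 : ℝ) / 2) * Real.exp (-(r - s) ^ 2 / (c₂ * t)) * (r * s + t) ^ (-ζ)
            ≤ besselHeat ζ t r s ∧
          besselHeat ζ t r s
            ≤ c₃ * t ^ (-(1 : ℝ) / 2) * Real.exp (-(r - s) ^ 2 / (c₄ * t)) * (r * s + t) ^ (-ζ) := by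
  obtain ⟨c, C, hc, hC, h⟩ := exists_pos_bounds_of_isTheta_principal (isTheta_besselHeat hζ)
    (fun q ⟨hr, hs, ht⟩ => besselHeat_nonneg hζ.le hr.le hs.le ht.le)
    (fun q ⟨hr, hs, ht⟩ => by positivity)
  refine ⟨c, 4, C, 4, hc, four_pos, hC, four_pos, fun r s t hr hs ht => ?_⟩
  simpa only [mul_assoc] using h (r, s, t) ⟨hr, hs, ht⟩
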